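/- Let n ≥ 1, d ∈ ℝ^n with d > 0 entrywise, y ∈ ℝ^n, and σ, τ ∈ S_n. If τ is chosen such that y_{τ(1)}/d_{τ(1)} ≥ y_{τ(2)}/d_{τ(2)} ≥ … ≥ y_{τ(n)}/d_{τ(n)}, then A_{στ} · y = E_{d,y}(σ). -/

import Mathlib

open Finset

noncomputable def th {n : ℕ} (d y : Fin n → ℝ) (c : ℝ) : ℝ :=
  sInf ((fun i => (∑ j, max (y j - y i / d i * d j) 0) + y i / d i * c) ''
    {i : Fin n | 0 < d i})

noncomputable def psum {n : ℕ} (d : Fin n → ℝ) (σ : Equiv.Perm (Fin n)) (j : ℕ) : ℝ :=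
  ∑ i ∈ Finset.univ.filter (fun i : Fin n => (i : ℕ) < j), d (σ i)

noncomputable def Emap {n : ℕ} (d y : Fin n → ℝ) (σ : Equiv.Perm (Fin n)) : Fin n → ℝ :=
  fun k => th d y (psum d σ ((σ.symm k : ℕ) + 1)) - th d y (psum d σ (σ.symm k : ℕ))

def dStoch {n : ℕ} (d : Fin n → ℝ) (A : Matrix (Fin n) (Fin n) ℝ) : Prop :=
  (∀ i j, 0 ≤ A i j) ∧ (∀ j, ∑ i, A i j = 1) ∧ A.mulVec d = d

def Mset {n : ℕ} (d y : Fin n → ℝ) : Set (Fin n → ℝ) :=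
  {x | ∃ A : Matrix (Fin n) (Fin n) ℝ, dStoch d A ∧ A.mulVec y = x}

noncomputable def Aentry {n : ℕ} (d : Fin n → ℝ) (σ τ : Equiv.Perm (Fin n))
    (α : ℕ → Fin n) (j k : Fin n) : ℝ :=
  if k = α j.val ∧ (α j.val).val < (α (j.val + 1)).val then
    (psum d τ ((α j.val).val + 1) - psum d σ j.val) / d (τ (α j.val))
  else if (α j.val).val < k.val ∧ k.val < (α (j.val + 1)).val then 1
  else if (α j.val).val < (α (j.val + 1)).val ∧ k = α (j.val + 1) then
    (psum d σ (j.val + 1) - psum d τ (α (j.val + 1)).val) / d (τ (α (j.val + 1)))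
  else if α j.val = α (j.val + 1) ∧ k = α (j.val + 1) then
    d (σ j) / d (τ (α (j.val + 1)))
  else 0

noncomputable def Amat {n : ℕ} (d : Fin n → ℝ) (σ τ : Equiv.Perm (Fin n))
    (α : ℕ → Fin n) : Matrix (Fin n) (Fin n) ℝ :=
  Matrix.of fun p q => Aentry d σ τ α (σ.symm p) (τ.symm q)

/-!
Place the permuted pairs `(d (τ k), y (τ k))` end to end; their partial sums are the vertices of a
polygonal curve. Row `σ j` of `A_{στ}` lists the fraction of each piece `τ k` covered by the
interval from `psum d σ j` to `psum d σ (j + 1)`, so applying it to `y` gives the increment of the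
polygonal curve over that interval, for any order `τ`.

When the slopes `y (τ k) / d (τ k)` decrease, the curve is concave and coincides with `th d y`.
Indeed each line `c ↦ ∑ j, max (y j - r * d j) 0 + r * c` lies above every vertex, hence above
every segment, and for `r` the slope of a segment the summands `max (y j - r * d j) 0` keep exactly
the pieces to its left, so the line extends that segment.
-/

section PartialSums

variable {n : ℕ}

lemma psum_zero (d : Fin n → ℝ) (σ : Equiv.Perm (Fin n)) : psum d σ 0 = 0 := by
  simp [psum]

lemma psum_eq_sum (d : Fin n → ℝ) (σ : Equiv.Perm (Fin n)) : psum d σ n = ∑ i, d i := by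
  simpa [psum] using Equiv.sum_comp σ d

lemma psum_eq_sum_ite (d : Fin n → ℝ) (σ : Equiv.Perm (Fin n)) (j : ℕ) :
    psum d σ j = ∑ i : Fin n, if (i : ℕ) < j then d (σ i) else 0 :=
  sum_filter _ _

lemma psum_add_one (d : Fin n → ℝ) (σ : Equiv.Perm (Fin n)) (a : Fin n) :
    psum d σ (a + 1) = psum d σ a + d (σ a) := by
  have hinsert : univ.filter (fun i : Fin n => (i : ℕ) < a + 1)
      = insert a (univ.filter fun i : Fin n => (i : ℕ) < a) := by
    ext i
    simp only [mem_filter, mem_univ, true_and, mem_insert, Fin.ext_iff]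
    omega
  rw [psum, hinsert, sum_insert (by simp), add_comm, psum]

lemma psum_monotone {d : Fin n → ℝ} (hd : ∀ i, 0 ≤ d i) (σ : Equiv.Perm (Fin n)) :
    Monotone (psum d σ) := fun _ _ hab =>
  sum_le_sum_of_subset_of_nonneg (monotone_filter_right _ fun _ _ hi => hi.trans_le hab)
    fun _ _ _ => hd _

lemma le_of_psum_lt_psum_add_one {d : Fin n → ℝ} (hd : ∀ i, 0 ≤ d i) {τ : Equiv.Perm (Fin n)}
    {a b : Fin n} (h : psum d τ a < psum d τ (b + 1)) : a ≤ b :=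
  Fin.le_def.mpr (Nat.lt_succ_iff.mp ((psum_monotone hd τ).reflect_lt h))

lemma psum_sub_mul (d y : Fin n → ℝ) (σ : Equiv.Perm (Fin n)) (r : ℝ) (j : ℕ) :
    psum (fun i => y i - r * d i) σ j = psum y σ j - r * psum d σ j := by
  simp only [psum, sum_sub_distrib, mul_sum]

lemma sum_ite_between (f : Fin n → ℝ) (σ : Equiv.Perm (Fin n)) {a b : ℕ} (hab : a < b) :
    ∑ k : Fin n, (if a < (k : ℕ) ∧ (k : ℕ) < b then f (σ k) else 0)
      = psum f σ b - psum f σ (a + 1) := by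
  rw [psum_eq_sum_ite, psum_eq_sum_ite, ← sum_sub_distrib]
  refine sum_congr rfl fun k _ => ?_
  split_ifs <;> first | omega | simp

lemma psum_le_sum_max (z : Fin n → ℝ) (σ : Equiv.Perm (Fin n)) (j : ℕ) :
    psum z σ j ≤ ∑ i, max (z i) 0 := by
  rw [psum_eq_sum_ite, ← Equiv.sum_comp σ fun i => max (z i) 0]
  gcongr with i
  split_ifs
  exacts [le_max_left _ _, le_max_right _ _]

lemma psum_eq_sum_max {z : Fin n → ℝ} {σ : Equiv.Perm (Fin n)} {j : ℕ}
    (hlt : ∀ i : Fin n, (i : ℕ) < j → 0 ≤ z (σ i))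
    (hge : ∀ i : Fin n, j ≤ (i : ℕ) → z (σ i) ≤ 0) :
    psum z σ j = ∑ i, max (z i) 0 := by
  rw [psum_eq_sum_ite, ← Equiv.sum_comp σ fun i => max (z i) 0]
  refine sum_congr rfl fun i _ => ?_
  split_ifs with hi
  · exact (max_eq_left (hlt i hi)).symm
  · exact (max_eq_right (hge i (not_lt.mp hi))).symm

lemma psum_mem_Icc {d : Fin n → ℝ} (hd : ∀ i, 0 ≤ d i) {σ τ : Equiv.Perm (Fin n)}
    {α : ℕ → Fin n} (hα0 : (α 0 : ℕ) = 0) (hαn : (α n : ℕ) = n - 1)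
    (hα : ∀ j, 1 ≤ j → j ≤ n - 1 →
      psum d σ j ∈ Set.Icc (psum d τ (α j)) (psum d τ (α j + 1)))
    {j : ℕ} (hj : j ≤ n) :
    psum d σ j ∈ Set.Icc (psum d τ (α j)) (psum d τ (α j + 1)) := by
  have hn : 0 < n := (α 0).pos
  have hmono := psum_monotone hd τ
  obtain rfl | hj0 := Nat.eq_zero_or_pos j
  · have hstart : psum d σ 0 = psum d τ (α 0) := by rw [hα0, psum_zero, psum_zero]
    exact ⟨hstart.ge, hstart.le.trans (hmono (Nat.le_succ _))⟩
  obtain hlt | rfl := hj.lt_or_eq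
  · exact hα j hj0 (Nat.le_sub_one_of_lt hlt)
  · have hend : psum d σ j = psum d τ (α j + 1) := by
      rw [hαn, Nat.sub_add_cancel hn, psum_eq_sum, psum_eq_sum]
    exact ⟨(hmono (Nat.le_succ _)).trans hend.ge, hend.le⟩

end PartialSums

section Curve

variable {n : ℕ}

/-- The line of slope `r` in the family that defines `th`: `th d y` is the minimum of these lines
over the ratios `r = y i / d i` with `0 < d i`. -/
noncomputable def supportLine (d y : Fin n → ℝ) (r c : ℝ) : ℝ :=
  (∑ j, max (y j - r * d j) 0) + r * c

/-- The affine function through the vertices with indices `a` and `a + 1` of the polygonal curve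
with vertices `(psum d τ j, psum y τ j)`, provided `d (τ a) ≠ 0`. It is not cut off outside the
interval between these two vertices. -/
noncomputable def chord (d y : Fin n → ℝ) (τ : Equiv.Perm (Fin n)) (a : Fin n) (c : ℝ) : ℝ :=
  psum y τ a + y (τ a) / d (τ a) * (c - psum d τ a)

lemma psum_le_supportLine (d y : Fin n → ℝ) (τ : Equiv.Perm (Fin n)) (r : ℝ) (j : ℕ) :
    psum y τ j ≤ supportLine d y r (psum d τ j) := by
  have hmax := psum_le_sum_max (fun i => y i - r * d i) τ j
  rw [psum_sub_mul] at hmax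
  exact sub_le_iff_le_add.mp hmax

lemma chord_le_supportLine {d : Fin n → ℝ} (y : Fin n → ℝ) {τ : Equiv.Perm (Fin n)} {a : Fin n}
    (ha : 0 < d (τ a)) (r : ℝ) {c : ℝ} (hc : c ∈ Set.Icc (psum d τ a) (psum d τ (a + 1))) :
    chord d y τ a c ≤ supportLine d y r c := by
  have hleft := psum_le_supportLine d y τ r a
  have hright := psum_le_supportLine d y τ r (a + 1)
  simp only [psum_add_one, Set.mem_Icc] at hright hc
  obtain ⟨s, rfl⟩ : ∃ s, c = psum d τ a + s * d (τ a) :=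
    ⟨(c - psum d τ a) / d (τ a), by rw [div_mul_cancel₀ _ ha.ne']; ring⟩
  have hs0 : 0 ≤ s := nonneg_of_mul_nonneg_left (by linarith) ha
  have hs1 : s ≤ 1 := le_of_mul_le_mul_right (by linarith) ha
  calc chord d y τ a (psum d τ a + s * d (τ a))
      = (1 - s) * psum y τ a + s * (psum y τ a + y (τ a)) := by
        rw [chord]; field_simp; ring
    _ ≤ (1 - s) * supportLine d y r (psum d τ a)
          + s * supportLine d y r (psum d τ a + d (τ a)) := by
        exact add_le_add (mul_le_mul_of_nonneg_left hleft (sub_nonneg.mpr hs1))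
          (mul_le_mul_of_nonneg_left hright hs0)
    _ = supportLine d y r (psum d τ a + s * d (τ a)) := by
        simp only [supportLine]; ring

lemma chord_eq_supportLine {d y : Fin n → ℝ} (hd : ∀ i, 0 < d i) {τ : Equiv.Perm (Fin n)}
    (hτ : Antitone fun j => y (τ j) / d (τ j)) (a : Fin n) (c : ℝ) :
    chord d y τ a c = supportLine d y (y (τ a) / d (τ a)) c := by
  have hmax : psum y τ a - y (τ a) / d (τ a) * psum d τ a
      = ∑ i, max (y i - y (τ a) / d (τ a) * d i) 0 := by
    rw [← psum_sub_mul]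
    refine psum_eq_sum_max (fun i hi => ?_) fun i hi => ?_
    · exact sub_nonneg.mpr ((le_div_iff₀ (hd _)).mp (hτ (Fin.le_def.mpr hi.le)))
    · exact sub_nonpos.mpr ((div_le_iff₀ (hd _)).mp (hτ (Fin.le_def.mpr hi)))
  rw [chord, supportLine, ← hmax]
  ring

lemma th_eq_chord {d y : Fin n → ℝ} (hd : ∀ i, 0 < d i) {τ : Equiv.Perm (Fin n)}
    (hτ : Antitone fun j => y (τ j) / d (τ j)) {a : Fin n} {c : ℝ}
    (hc : c ∈ Set.Icc (psum d τ a) (psum d τ (a + 1))) :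
    th d y c = chord d y τ a c := by
  refine IsLeast.csInf_eq ⟨⟨τ a, hd _, (chord_eq_supportLine hd hτ a c).symm⟩, ?_⟩
  rintro _ ⟨i, -, rfl⟩
  exact chord_le_supportLine y (hd _) (y i / d i) hc

end Curve

section Rows

variable {n : ℕ} (d : Fin n → ℝ) (σ τ : Equiv.Perm (Fin n))

lemma Amat_mulVec_apply (α : ℕ → Fin n) (y : Fin n → ℝ) (j : Fin n) :
    (Amat d σ τ α).mulVec y (σ j) = ∑ k, Aentry d σ τ α j k * y (τ k) := by
  simp only [Matrix.mulVec, dotProduct, Amat, Matrix.of_apply, Equiv.symm_apply_apply]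
  rw [← Equiv.sum_comp τ]
  simp only [Equiv.symm_apply_apply]

variable {α : ℕ → Fin n} {j : Fin n}

lemma Aentry_of_eq (hα : α j = α (j + 1)) (k : Fin n) :
    Aentry d σ τ α j k = if k = α (j + 1) then d (σ j) / d (τ (α (j + 1))) else 0 := by
  have hbetween : ¬((α (j + 1) : ℕ) < k ∧ (k : ℕ) < α (j + 1)) := fun h => h.1.not_gt h.2
  simp only [Aentry, hα, lt_irrefl, and_false, false_and, true_and, hbetween, if_false]

lemma Aentry_of_lt (hα : α j < α (j + 1)) (k : Fin n) :
    Aentry d σ τ α j k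
      = (if k = α j then (psum d τ (α j + 1) - psum d σ j) / d (τ (α j)) else 0)
        + (if (α j : ℕ) < k ∧ (k : ℕ) < α (j + 1) then 1 else 0)
        + (if k = α (j + 1) then
            (psum d σ (j + 1) - psum d τ (α (j + 1))) / d (τ (α (j + 1))) else 0) := by
  have hval : (α j : ℕ) < α (j + 1) := hα
  by_cases hfirst : k = α j
  · simp [Aentry, hfirst, hval, hα.ne]
  by_cases hlast : k = α (j + 1)
  · simp [Aentry, hlast, hval, hα.ne']
  · simp [Aentry, hfirst, hlast]

lemma sum_Aentry_mul (y : Fin n → ℝ) (hα : α j ≤ α (j + 1)) (hd : d (τ (α j)) ≠ 0) :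
    ∑ k, Aentry d σ τ α j k * y (τ k)
      = chord d y τ (α (j + 1)) (psum d σ (j + 1)) - chord d y τ (α j) (psum d σ j) := by
  obtain heq | hlt := hα.eq_or_lt
  · simp only [Aentry_of_eq d σ τ heq, ite_mul, zero_mul, sum_ite_eq', mem_univ, if_true, chord,
      psum_add_one, heq]
    ring
  · simp only [Aentry_of_lt d σ τ hlt, add_mul, ite_mul, zero_mul, one_mul, sum_add_distrib,
      sum_ite_eq', mem_univ, if_true, sum_ite_between y τ hlt, chord, psum_add_one]
    field_simp
    ring

end Rows

/-- If τ sorts y/d non-increasingly, then A_{στ} maps y to E_{d,y}(σ). -/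
theorem stmt6 (n : ℕ) (hn : 1 ≤ n) (d : Fin n → ℝ) (hd : ∀ i, 0 < d i)
    (y : Fin n → ℝ) (σ τ : Equiv.Perm (Fin n))
    (hτ : Antitone (fun j : Fin n => y (τ j) / d (τ j)))
    (α : ℕ → Fin n)
    (hα0 : (α 0).val = 0) (hαn : (α n).val = n - 1)
    (hα : ∀ j : ℕ, 1 ≤ j → j ≤ n - 1 →
      psum d τ (α j).val < psum d σ j ∧ psum d σ j ≤ psum d τ ((α j).val + 1)) :
    (Amat d σ τ α).mulVec y = Emap d y σ := by
  have hd0 : ∀ i, 0 ≤ d i := fun i => (hd i).le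
  have hmem : ∀ {j : ℕ}, j ≤ n →
      psum d σ j ∈ Set.Icc (psum d τ (α j)) (psum d τ (α j + 1)) :=
    psum_mem_Icc hd0 hα0 hαn fun j h1 hj => ⟨(hα j h1 hj).1.le, (hα j h1 hj).2⟩
  funext p
  obtain ⟨j, rfl⟩ := σ.surjective p
  have hleft := hmem j.isLt.le
  have hright := hmem (Nat.succ_le_of_lt j.isLt)
  have hstep : psum d σ j < psum d σ (j + 1) := by
    rw [psum_add_one]
    exact lt_add_of_pos_right _ (hd _)
  have hle : α j ≤ α (j + 1) :=
    le_of_psum_lt_psum_add_one hd0 (hleft.1.trans_lt (hstep.trans_le hright.2))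
  rw [Amat_mulVec_apply, sum_Aentry_mul d σ τ y hle (hd _).ne', Emap, Equiv.symm_apply_apply,
    th_eq_chord hd hτ hright, th_eq_chord hd hτ hleft]
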